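/- arXiv:1812.11111 — 5 statements merged into one kernel-verified Lean document; each statement's English description precedes it below -/
import Mathlib

section
/- For every integer n ≥ 1 and every vertex v, the vertex v belongs to S_n (the set of vertices remaining after n pruning steps) if and only if for every layer l, the number of neighbors w of v in layer l such that alive (n−1) l v w holds is at least k l. (Theorem 2 of the paper, restated via the recursive characterization of MNEB membership in Y_{[l],n−1}.) -/
/-- The pruning operator: keep the vertices of `S` that have, in every layer `i`,
at least `k i` neighbors (in layer `i`) inside `S`. -/
def prune {V : Type*} {R : ℕ} (G : Fin R → SimpleGraph V) [∀ i, DecidableRel (G i).Adj]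
    (k : Fin R → ℕ) (S : Set V) : Set V :=
  {v | v ∈ S ∧ ∀ i : Fin R, k i ≤ Nat.card {w : V // (G i).Adj v w ∧ w ∈ S}}

/-- The pruning sequence: `S_0` is the set of all vertices, `S_{n+1} = P (S_n)`. -/
def pruneSeq {V : Type*} {R : ℕ} (G : Fin R → SimpleGraph V) [∀ i, DecidableRel (G i).Adj]
    (k : Fin R → ℕ) : ℕ → Set V
  | 0 => Set.univ
  | n + 1 => prune G k (pruneSeq G k n)

/-- Aliveness of the stub `(e_{[i]}, w)`, where `e_{[i]}` is the layer-`i` edge from `v` to `w`: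
`alive 0 i v w` holds whenever `v, w` are adjacent in layer `i`, and `alive (n+1) i v w` holds
iff `v, w` are adjacent in layer `i` and for every layer `l`, the number of vertices `u`
adjacent to `w` in layer `l` with `(l, u) ≠ (i, v)` such that `alive n l w u` holds is at
least `k l - 1` if `l = i` and at least `k l` otherwise. -/
def alive {V : Type*} {R : ℕ} (G : Fin R → SimpleGraph V) [∀ i, DecidableRel (G i).Adj]
    (k : Fin R → ℕ) : ℕ → Fin R → V → V → Prop
  | 0, i, v, w => (G i).Adj v w
  | n + 1, i, v, w => (G i).Adj v w ∧ ∀ l : Fin R,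
      (if l = i then k l - 1 else k l) ≤
        Nat.card {u : V // (G l).Adj w u ∧ (l, u) ≠ (i, v) ∧ alive G k n l w u}

/-!
Deleting `v` from the neighbors of `w` lowers a single count by at most one, and the threshold
`k i - 1` in `alive` makes up for exactly that, so every edge into a vertex meeting all thresholds
is alive. Conversely, an alive edge from `v` to `w` shows that `w` meets all thresholds once `v` may
be counted again, that is, once the reverse edge from `w` to `v` is alive; and it is, because `v`
itself meets all thresholds.
-/

section Counting

variable {α : Type*} {p q : α → Prop}

theorem card_subtype_mono [hq : Finite {a // q a}] (h : ∀ a, p a → q a) :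
    Nat.card {a // p a} ≤ Nat.card {a // q a} :=
  Set.ncard_le_ncard (s := {a | p a}) (t := {a | q a}) h hq

theorem card_subtype_le_add_one_of_ne_imp [hq : Finite {a // q a}] {b : α}
    (h : ∀ a, p a → a ≠ b → q a) : Nat.card {a // p a} ≤ Nat.card {a // q a} + 1 :=
  have hsub : {a | p a} \ {b} ⊆ {a | q a} := fun a ⟨ha, hne⟩ => h a ha hne
  Nat.le_add_of_sub_le <|
    (Set.pred_ncard_le_ncard_sdiff_singleton _ b).trans (Set.ncard_le_ncard hsub hq)

theorem card_subtype_add_one_le_of_imp_ne [hq : Finite {a // q a}] {b : α} (hb : q b)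
    (h : ∀ a, p a → q a ∧ a ≠ b) : Nat.card {a // p a} + 1 ≤ Nat.card {a // q a} :=
  Set.ncard_lt_ncard (s := {a | p a}) (t := {a | q a})
    ⟨fun a ha => (h a ha).1, fun hsub => (h b (hsub hb)).2 rfl⟩ hq

end Counting

instance finite_adj_and {V : Type*} (H : SimpleGraph V) (v : V) [Finite (H.neighborSet v)]
    (p : V → Prop) : Finite {w // H.Adj v w ∧ p w} :=
  inferInstanceAs (Finite ({w ∈ H.neighborSet v | p w} : Set V))

section Pruning

variable {V : Type*} {R : ℕ} {G : Fin R → SimpleGraph V} [∀ i, DecidableRel (G i).Adj]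
  {k : Fin R → ℕ} {n : ℕ} {i : Fin R} {v w : V}

variable (G k n) in
/-- The vertices meeting all thresholds in the sense of Theorem 2: in every layer `l`, at least
`k l` of their edges are `n`-alive in the outgoing direction. -/
def aliveSet : Set V :=
  {v | ∀ l, k l ≤ Nat.card {w : V // (G l).Adj v w ∧ alive G k n l v w}}

theorem alive.adj (h : alive G k n i v w) : (G i).Adj v w := by
  cases n with
  | zero => exact h
  | succ n => exact h.1

theorem prune_univ : prune G k Set.univ = aliveSet G k 0 := by
  ext v
  simp [prune, aliveSet, alive]

variable [∀ i v, Finite ((G i).neighborSet v)]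

theorem alive.of_succ (h : alive G k (n + 1) i v w) : alive G k n i v w := by
  induction n generalizing i v w with
  | zero => exact h.1
  | succ n ih =>
    exact ⟨h.1, fun l => (h.2 l).trans
      (card_subtype_mono fun u ⟨hadj, hne, halive⟩ => ⟨hadj, hne, ih halive⟩)⟩

theorem aliveSet_succ_subset : aliveSet G k (n + 1) ⊆ aliveSet G k n :=
  fun _ hv l => (hv l).trans (card_subtype_mono fun _ ⟨hadj, halive⟩ => ⟨hadj, halive.of_succ⟩)

theorem alive_succ_of_mem_aliveSet (hadj : (G i).Adj v w) (hw : w ∈ aliveSet G k n) :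
    alive G k (n + 1) i v w := by
  refine ⟨hadj, fun l => ?_⟩
  split_ifs with hli
  · refine Nat.sub_le_of_le_add ((hw l).trans (card_subtype_le_add_one_of_ne_imp (b := v) ?_))
    rintro u ⟨hwu, hu⟩ huv
    exact ⟨hwu, fun heq => huv (congrArg Prod.snd heq), hu⟩
  · refine (hw l).trans (card_subtype_mono ?_)
    rintro u ⟨hwu, hu⟩
    exact ⟨hwu, fun heq => hli (congrArg Prod.fst heq), hu⟩

theorem alive.mem_aliveSet_of_reverse (h : alive G k (n + 1) i v w)
    (hrev : alive G k n i w v) : w ∈ aliveSet G k n := by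
  intro l
  have hl := h.2 l
  split_ifs at hl with hli
  · subst hli
    refine (Nat.le_add_of_sub_le hl).trans (card_subtype_add_one_le_of_imp_ne ⟨hrev.adj, hrev⟩ ?_)
    rintro u ⟨hwu, hne, hu⟩
    exact ⟨⟨hwu, hu⟩, fun huv => hne (congrArg (Prod.mk l) huv)⟩
  · exact hl.trans (card_subtype_mono fun u ⟨hwu, _, hu⟩ => ⟨hwu, hu⟩)

theorem prune_aliveSet : prune G k (aliveSet G k n) = aliveSet G k (n + 1) := by
  ext v
  constructor
  · rintro ⟨-, hv⟩ l
    exact (hv l).trans (card_subtype_mono fun w ⟨hadj, hw⟩ =>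
      ⟨hadj, alive_succ_of_mem_aliveSet hadj hw⟩)
  · intro hv
    have hvn : v ∈ aliveSet G k n := aliveSet_succ_subset hv
    refine ⟨hvn, fun l => (hv l).trans (card_subtype_mono fun w ⟨hadj, hw⟩ => ⟨hadj, ?_⟩)⟩
    have hrev : alive G k (n + 1) l w v := alive_succ_of_mem_aliveSet hadj.symm hvn
    exact hw.mem_aliveSet_of_reverse hrev.of_succ

theorem pruneSeq_succ_eq_aliveSet : pruneSeq G k (n + 1) = aliveSet G k n := by
  induction n with
  | zero => exact prune_univ
  | succ n ih => rw [pruneSeq, ih, prune_aliveSet]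

end Pruning

theorem mem_pruneSeq_iff_alive_general {V : Type*} {R : ℕ}
    (G : Fin R → SimpleGraph V) [∀ i, DecidableRel (G i).Adj]
    [∀ i v, Finite ((G i).neighborSet v)] (k : Fin R → ℕ) (n : ℕ) (hn : 1 ≤ n) (v : V) :
    v ∈ pruneSeq G k n ↔
      ∀ l : Fin R, k l ≤ Nat.card {w : V // (G l).Adj v w ∧ alive G k (n - 1) l v w} := by
  obtain ⟨m, rfl⟩ := Nat.exists_eq_add_of_le' hn
  exact Set.ext_iff.1 pruneSeq_succ_eq_aliveSet v

/-- Theorem 2 of the paper: for `n ≥ 1`, a vertex `v` survives the `n`-th pruning step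
iff, in every layer `l`, it has at least `k l` neighbors `w` whose incoming stub is
`(n-1)`-alive. -/
theorem mem_pruneSeq_iff_alive {V : Type*} [Fintype V] {R : ℕ}
    (G : Fin R → SimpleGraph V) [∀ i, DecidableRel (G i).Adj] (k : Fin R → ℕ)
    (n : ℕ) (hn : 1 ≤ n) (v : V) :
    v ∈ pruneSeq G k n ↔
      ∀ l : Fin R, k l ≤ Nat.card {w : V // (G l).Adj v w ∧ alive G k (n - 1) l v w} :=
  mem_pruneSeq_iff_alive_general G k n hn v
end

section
/- (Necessity half of Theorem 2.) For every integer n ≥ 1 and every vertex v, if v ∈ S_n then for every layer l the number of neighbors w of v in layer l such that alive (n−1) l v w holds is at least k l. -/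
section

variable {V : Type*} {R : ℕ} {G : Fin R → SimpleGraph V} [∀ i, DecidableRel (G i).Adj]
  {k : Fin R → ℕ}

theorem card_adj_and_mono {H : SimpleGraph V} {w : V} (hfin : (H.neighborSet w).Finite)
    {p q : V → Prop} (hpq : ∀ u, H.Adj w u → p u → q u) :
    Nat.card {u : V // H.Adj w u ∧ p u} ≤ Nat.card {u : V // H.Adj w u ∧ q u} :=
  Nat.card_mono (t := {u | H.Adj w u ∧ q u}) (hfin.subset fun _ hu => hu.1)
    fun u hu => ⟨hu.1, hpq u hu.1 hu.2⟩

theorem le_card_nonbacktracking_of_mem_prune {S : Set V} {w : V} (hw : w ∈ prune G k S)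
    (i : Fin R) (v : V) (l : Fin R) :
    (if l = i then k l - 1 else k l) ≤
      Nat.card {u : V // (G l).Adj w u ∧ (l, u) ≠ (i, v) ∧ u ∈ S} := by
  have hdeg : k l ≤ {u | (G l).Adj w u ∧ u ∈ S}.ncard := hw.2 l
  change _ ≤ {u | (G l).Adj w u ∧ (l, u) ≠ (i, v) ∧ u ∈ S}.ncard
  split_ifs with hl
  · have hremove : {u | (G l).Adj w u ∧ (l, u) ≠ (i, v) ∧ u ∈ S} =
        {u | (G l).Adj w u ∧ u ∈ S} \ {v} := by
      ext u
      simp only [hl, ne_eq, Prod.mk.injEq, true_and, Set.mem_ofPred_eq, Set.mem_sdiff,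
        Set.mem_singleton_iff]
      tauto
    rw [hremove]
    exact (Nat.sub_le_sub_right hdeg 1).trans (Set.pred_ncard_le_ncard_sdiff_singleton _ v)
  · simpa only [ne_eq, Prod.mk.injEq, hl, false_and, not_false_eq_true, true_and] using hdeg

theorem alive_of_adj_of_mem_pruneSeq (hfin : ∀ i v, ((G i).neighborSet v).Finite) {n : ℕ}
    {i : Fin R} {v w : V} (hvw : (G i).Adj v w) (hw : w ∈ pruneSeq G k n) :
    alive G k n i v w := by
  induction n generalizing i v w with
  | zero => exact hvw
  | succ n ih =>
    refine ⟨hvw, fun l => (le_card_nonbacktracking_of_mem_prune hw i v l).trans ?_⟩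
    exact card_adj_and_mono (hfin l w) fun _ hwu hu => ⟨hu.1, ih hwu hu.2⟩

theorem alive_of_mem_pruneSeq_general (hfin : ∀ i v, ((G i).neighborSet v).Finite) {n : ℕ}
    {v : V} (hv : v ∈ pruneSeq G k (n + 1)) (l : Fin R) :
    k l ≤ Nat.card {w : V // (G l).Adj v w ∧ alive G k n l v w} :=
  (hv.2 l).trans <| card_adj_and_mono (hfin l v) fun _ => alive_of_adj_of_mem_pruneSeq hfin

end

/-- Necessity half of Theorem 2: for `n ≥ 1`, if `v` survives the `n`-th pruning, then in
every layer `l` the vertex `v` has at least `k l` neighbors `w` with `alive (n-1) l v w`. -/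
theorem alive_of_mem_pruneSeq {V : Type*} [Fintype V] {R : ℕ}
    (G : Fin R → SimpleGraph V) [∀ i, DecidableRel (G i).Adj] (k : Fin R → ℕ)
    (n : ℕ) (hn : 1 ≤ n) (v : V) (hv : v ∈ pruneSeq G k n) :
    ∀ l : Fin R, k l ≤ Nat.card {w : V // (G l).Adj v w ∧ alive G k (n - 1) l v w} := by
  obtain ⟨m, rfl⟩ := Nat.exists_eq_add_of_le' hn
  exact alive_of_mem_pruneSeq_general (fun _ _ => Set.toFinite _) hv
end

section
/- (Intermediate claim from the necessity proof of Theorem 2.) For every n ≥ 1, every layer l and all vertices v, w adjacent in layer l: if alive n l v w does NOT hold, then w ∉ S_n; that is, a vertex at the head of a dead stub is removed by the n-th pruning step. -/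
/-!
If `w` survives `n + 1` prunings, then in every layer `l` it has at least `k l` neighbors surviving
`n` prunings, and inductively the stub from `w` to each of them is alive. Aliveness of the stub from
`v` to `w` discards a single one of these, the edge back to `v`, and only in the layer of that edge:
this is the loss accounted for by the threshold `k l - 1`.
-/

theorem le_ncard_sep_pair_ne {ι α : Type*} [DecidableEq ι] {A : Set α} {m : ℕ}
    (hm : m ≤ A.ncard) (i l : ι) (a : α) :
    (if l = i then m - 1 else m) ≤ {u ∈ A | (l, u) ≠ (i, a)}.ncard := by
  split_ifs with hl
  · have hA : {u ∈ A | (l, u) ≠ (i, a)} = A \ {a} := by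
      ext u
      simp [hl]
    rw [hA]
    exact (Nat.sub_le_sub_right hm 1).trans (Set.pred_ncard_le_ncard_sdiff_singleton A a)
  · have hA : {u ∈ A | (l, u) ≠ (i, a)} = A := by
      ext u
      simp [hl]
    rwa [hA]

section LocallyFinite

variable {V : Type*} {R : ℕ} {G : Fin R → SimpleGraph V} [∀ i, DecidableRel (G i).Adj]
  [∀ i, (G i).LocallyFinite] {k : Fin R → ℕ} {n : ℕ} {v w : V}

theorem alive_succ_of_mem_prune {S : Set V} {i : Fin R}
    (halive : ∀ (l : Fin R) (u : V), (G l).Adj w u → u ∈ S → alive G k n l w u)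
    (hadj : (G i).Adj v w) (hw : w ∈ prune G k S) : alive G k (n + 1) i v w := by
  refine ⟨hadj, fun l => ?_⟩
  let survivors : Set V := {u | (G l).Adj w u ∧ u ∈ S}
  let aliveStubs : Set V := {u | (G l).Adj w u ∧ (l, u) ≠ (i, v) ∧ alive G k n l w u}
  have hfin : aliveStubs.Finite := ((G l).neighborSet w).toFinite.subset fun _ hu => hu.1
  have hsub : {u ∈ survivors | (l, u) ≠ (i, v)} ⊆ aliveStubs :=
    fun u ⟨⟨hwu, huS⟩, hne⟩ => ⟨hwu, hne, halive l u hwu huS⟩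
  have hk : k l ≤ survivors.ncard := hw.2 l
  exact (le_ncard_sep_pair_ne hk i l v).trans (Set.ncard_le_ncard hsub hfin)

theorem alive_of_mem_pruneSeq_s6 {l : Fin R} (hadj : (G l).Adj v w) (hw : w ∈ pruneSeq G k n) :
    alive G k n l v w := by
  induction n generalizing l v w with
  | zero => exact hadj
  | succ n ih => exact alive_succ_of_mem_prune (fun _ _ hwu hu => ih hwu hu) hadj hw

theorem not_mem_pruneSeq_of_not_alive_general {l : Fin R} (hadj : (G l).Adj v w)
    (h : ¬ alive G k n l v w) : w ∉ pruneSeq G k n :=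
  mt (alive_of_mem_pruneSeq_s6 hadj) h

end LocallyFinite

/-- Intermediate claim from the necessity proof of Theorem 2: for `n ≥ 1` and `v, w`
adjacent in layer `l`, if `alive n l v w` fails then `w` is removed by the `n`-th pruning. -/
theorem not_mem_pruneSeq_of_not_alive {V : Type*} [Fintype V] {R : ℕ}
    (G : Fin R → SimpleGraph V) [∀ i, DecidableRel (G i).Adj] (k : Fin R → ℕ)
    (n : ℕ) (hn : 1 ≤ n) (l : Fin R) (v w : V) (hadj : (G l).Adj v w)
    (h : ¬ alive G k n l v w) : w ∉ pruneSeq G k n :=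
  not_mem_pruneSeq_of_not_alive_general hadj h
end

section
/- (Limit version of Theorem 2.) On a finite multi-layer network, a vertex v belongs to the k-core ⋂_{n} S_n if and only if for every layer l the number of neighbors w of v in layer l such that alive n l v w holds for ALL n ≥ 0 is at least k l. -/
/-!
A vertex is in `S_{n+1}` iff, in every layer `l`, at least `k l` of its stubs are alive at time `n`.
The point is that aliveness of the stub from `v` to `w` ignores the edge back to `v` and, in return,
lowers the threshold of that layer by one. If the stub from `w` back to `v` is alive, the two
adjustments cancel, so both counts at `w` express the same condition; and it is alive as soon as
`v` itself has enough alive stubs one step earlier. In the limit, the sets of alive stubs at a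
fixed vertex decrease with `n`, and stabilize since there are finitely many stubs in each layer.
-/

/-- The threshold condition at `v` in a multi-layer network: in every layer `l`, at least `k l` of
the neighbors `w` of `v` satisfy `p l w`. Pruning and aliveness are both instances of it, for
suitable `k` and `p`. As `Set.ncard` is `0` on infinite sets, it is meant for vertices with finitely
many neighbors in each layer. -/
def MeetsThreshold {ι V : Type*} (G : ι → SimpleGraph V) (k : ι → ℕ) (v : V)
    (p : ι → V → Prop) : Prop :=
  ∀ l, k l ≤ {w | (G l).Adj v w ∧ p l w}.ncard

section

variable {ι V : Type*} {G : ι → SimpleGraph V} {k : ι → ℕ} {v : V} {p q : ι → V → Prop}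

theorem setOf_adj_and_ne_and_eq_sdiff_singleton {i : ι} {u : V} :
    {w | (G i).Adj v w ∧ (i, w) ≠ (i, u) ∧ p i w} = {w | (G i).Adj v w ∧ p i w} \ {u} := by
  grind

theorem MeetsThreshold.erase [DecidableEq ι] (h : MeetsThreshold G k v p) (i : ι) (u : V) :
    MeetsThreshold G (fun l => if l = i then k l - 1 else k l) v
      (fun l w => (l, w) ≠ (i, u) ∧ p l w) := by
  intro l
  obtain rfl | hl := eq_or_ne l i
  · simp only [if_true, setOf_adj_and_ne_and_eq_sdiff_singleton]
    exact (Nat.sub_le_sub_right (h l) 1).trans (Set.pred_ncard_le_ncard_sdiff_singleton _ u)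
  · simpa [hl] using h l

theorem finite_setOf_adj_and {H : SimpleGraph V} [Finite (H.neighborSet v)] {s : V → Prop} :
    {w | H.Adj v w ∧ s w}.Finite :=
  (H.neighborSet v).toFinite.subset fun _ hw => hw.1

variable [∀ l, Finite ((G l).neighborSet v)]

theorem MeetsThreshold.mono (h : MeetsThreshold G k v p)
    (hpq : ∀ l w, (G l).Adj v w → p l w → q l w) : MeetsThreshold G k v q := fun l =>
  (h l).trans <|
    Set.ncard_le_ncard (fun w hw => ⟨hw.1, hpq l w hw.1 hw.2⟩) finite_setOf_adj_and

theorem MeetsThreshold.of_erase [DecidableEq ι] {i : ι} {u : V}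
    (h : MeetsThreshold G (fun l => if l = i then k l - 1 else k l) v
      (fun l w => (l, w) ≠ (i, u) ∧ p l w))
    (hvu : (G i).Adj v u) (hu : p i u) : MeetsThreshold G k v p := by
  intro l
  have hl := h l
  obtain rfl | hli := eq_or_ne l i
  · simp only [if_true, setOf_adj_and_ne_and_eq_sdiff_singleton] at hl
    have hcard := Set.ncard_sdiff_singleton_add_one
      (show u ∈ {w | (G l).Adj v w ∧ p l w} from ⟨hvu, hu⟩) finite_setOf_adj_and
    lia
  · simpa [hli] using hl

theorem meetsThreshold_forall_iff {α : Type*} [Preorder α] [IsDirectedOrder α] [Nonempty α]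
    {p : α → ι → V → Prop} (hp : Antitone p) :
    MeetsThreshold G k v (fun l w => ∀ a, p a l w) ↔ ∀ a, MeetsThreshold G k v (p a) := by
  refine ⟨fun h a => h.mono fun _ _ _ hw => hw a, fun h l => ?_⟩
  have eventually_stable (w : V) : ∀ᶠ a in Filter.atTop, p a l w → ∀ b, p b l w := by
    by_cases hw : ∀ b, p b l w
    · exact .of_forall fun _ _ => hw
    · obtain ⟨b, hb⟩ := not_forall.1 hw
      filter_upwards [Filter.eventually_ge_atTop b] with a hba ha
      exact absurd (hp hba l w ha) hb
  obtain ⟨a, ha⟩ := ((Filter.eventually_all_finite ((G l).neighborSet v).toFinite).2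
    fun w _ => eventually_stable w).exists
  exact (h a l).trans <|
    Set.ncard_le_ncard (fun w hw => ⟨hw.1, ha w hw.1 hw.2⟩) finite_setOf_adj_and

end

section

variable {V : Type*} {R : ℕ} {G : Fin R → SimpleGraph V} [∀ i, DecidableRel (G i).Adj]
  {k : Fin R → ℕ} {n : ℕ} {i : Fin R} {v w : V}

theorem mem_prune_iff {S : Set V} :
    v ∈ prune G k S ↔ v ∈ S ∧ MeetsThreshold G k v (fun _ w => w ∈ S) :=
  Iff.rfl

theorem alive_succ_iff :
    alive G k (n + 1) i v w ↔ (G i).Adj v w ∧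
      MeetsThreshold G (fun l => if l = i then k l - 1 else k l) w
        (fun l u => (l, u) ≠ (i, v) ∧ alive G k n l w u) :=
  Iff.rfl

theorem MeetsThreshold.alive_succ (h : MeetsThreshold G k w (alive G k n · w))
    (hvw : (G i).Adj v w) : alive G k (n + 1) i v w :=
  alive_succ_iff.2 ⟨hvw, h.erase i v⟩

variable [∀ i v, Finite ((G i).neighborSet v)]

theorem antitone_alive : Antitone (alive G k) := by
  refine antitone_nat_of_succ_le fun n => ?_
  induction n with
  | zero => exact fun _ _ _ h => h.1
  | succ n ih =>
    intro i v w h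
    rw [alive_succ_iff] at h
    exact alive_succ_iff.2 ⟨h.1, h.2.mono fun l u _ hu => ⟨hu.1, ih l w u hu.2⟩⟩

theorem alive.meetsThreshold (hvw : alive G k (n + 1) i v w) (hwv : alive G k n i w v) :
    MeetsThreshold G k w (alive G k n · w) :=
  (alive_succ_iff.1 hvw).2.of_erase hwv.adj hwv

theorem mem_pruneSeq_succ_iff_meetsThreshold_alive :
    v ∈ pruneSeq G k (n + 1) ↔ MeetsThreshold G k v (alive G k n · v) := by
  induction n generalizing v with
  | zero =>
    rw [pruneSeq, mem_prune_iff]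
    exact ⟨fun h => h.2.mono fun _ _ hvw _ => hvw,
      fun h => ⟨Set.mem_univ v, h.mono fun _ _ _ _ => Set.mem_univ _⟩⟩
  | succ n ih =>
    rw [pruneSeq, mem_prune_iff]
    refine ⟨fun h => h.2.mono fun l w hvw hw => (ih.1 hw).alive_succ hvw, fun h => ?_⟩
    have hv : MeetsThreshold G k v (alive G k n · v) :=
      h.mono fun l w _ => antitone_alive n.le_succ l v w
    refine ⟨ih.2 hv, h.mono fun l w hvw hw => ih.2 (hw.meetsThreshold ?_)⟩
    exact antitone_alive n.le_succ l w v (hv.alive_succ hvw.symm)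

end

theorem mem_kCore_iff_alive_general {V : Type*} {R : ℕ} (G : Fin R → SimpleGraph V)
    [∀ i, DecidableRel (G i).Adj] [∀ i v, Finite ((G i).neighborSet v)] (k : Fin R → ℕ) (v : V) :
    v ∈ ⋂ n : ℕ, pruneSeq G k n ↔
      ∀ l : Fin R, k l ≤ Nat.card {w : V // (G l).Adj v w ∧ ∀ n : ℕ, alive G k n l v w} :=
  calc v ∈ ⋂ n : ℕ, pruneSeq G k n
    _ ↔ ∀ n, v ∈ pruneSeq G k (n + 1) := by
      rw [Set.mem_iInter, ← Nat.and_forall_add_one]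
      exact and_iff_right (Set.mem_univ v)
    _ ↔ ∀ n, MeetsThreshold G k v (alive G k n · v) :=
      forall_congr' fun _ => mem_pruneSeq_succ_iff_meetsThreshold_alive
    _ ↔ MeetsThreshold G k v (fun l w => ∀ n, alive G k n l v w) :=
      (meetsThreshold_forall_iff fun _ _ hmn l => antitone_alive hmn l v).symm

/-- Limit version of Theorem 2: on a finite multi-layer network, a vertex `v` belongs to the
k-core `⋂ n, S_n` iff for every layer `l` the number of neighbors `w` of `v` in layer `l`
such that `alive n l v w` holds for all `n` is at least `k l`. -/
theorem mem_kCore_iff_alive {V : Type*} [Fintype V] {R : ℕ}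
    (G : Fin R → SimpleGraph V) [∀ i, DecidableRel (G i).Adj] (k : Fin R → ℕ) (v : V) :
    v ∈ ⋂ n : ℕ, pruneSeq G k n ↔
      ∀ l : Fin R, k l ≤ Nat.card {w : V // (G l).Adj v w ∧ ∀ n : ℕ, alive G k n l v w} :=
  mem_kCore_iff_alive_general G k v
end

section
/- (Consistency of the correlated recursion with the uncorrelated one.) Under the stated hypotheses, for every n ≥ 0, every layer h, and every index vector i with q^{[h]}_i ≠ 0, one has Y n h i = y n h. In particular, when the edge joint distribution factorizes as e^{[h]}_{i,j} = q^{[h]}_i · q^{[h]}_j (no degree–degree correlations), the solution of the correlated k-core recursion is independent of the conditioning index i and coincides with the solution of the uncorrelated recursion. -/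
/-!
Argue by induction on `n`. If `q h j ≠ 0`, the `j`-th summand of the correlated recursion depends
on `Y n l` at the shifted index `shiftVec j l h` only for layers with `j l ≠ 0`: when `j l = 0`,
the `l`-th factor is `C(0, 0) = 1` whatever the probability. At the remaining layers compatibility
keeps the shifted index in the support of `q l`, where `Y n l` takes the value `y n l` by induction.
So the correlated series is `q h i` times the uncorrelated one, and `q h i` can be cancelled.
-/

/-- The threshold vector `k_h`: its `l`-th component is `k l` for `l ≠ h` and `k h - 1`
for `l = h`. -/
def kvec {R : ℕ} (k : Fin R → ℕ) (h : Fin R) : Fin R → ℕ :=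
  fun l => if l = h then k h - 1 else k l

/-- The shifted vector `j_l^{[h]}`: it equals `j` if `l = h`, and otherwise is obtained from
`j` by decreasing its `l`-th component by `1` and increasing its `h`-th component by `1`. -/
def shiftVec {R : ℕ} (j : Fin R → ℕ) (l h : Fin R) : Fin R → ℕ :=
  if l = h then j
  else fun m => if m = l then j l - 1 else if m = h then j h + 1 else j m

section BinomialTail

variable {ι A : Type*} [Fintype ι] [DecidableEq ι] [CommRing A]

/-- The probability that independent binomial variables with parameters `(j l, p l)` are all at
least `a l`, as a polynomial in the `p l`. It is the kernel of both recursions, with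
`a = kvec k h`. -/
def binomialTail (a j : ι → ℕ) (p : ι → A) : A :=
  ∑ m ∈ Finset.Icc a j, ∏ l, ((j l).choose (m l) : A) * p l ^ m l * (1 - p l) ^ (j l - m l)

theorem binomialTail_eq_zero_of_not_le {a j : ι → ℕ} (h : ¬a ≤ j) (p : ι → A) :
    binomialTail a j p = 0 := by
  rw [binomialTail, Finset.Icc_eq_empty h, Finset.sum_empty]

theorem mul_binomialTail_eq_ite (c : A) (a j : ι → ℕ) (p : ι → A) [Decidable (∀ l, a l ≤ j l)] :
    c * binomialTail a j p =
      if ∀ l, a l ≤ j l then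
        c * ∑ m ∈ Finset.Icc a j, ∏ l,
          ((j l).choose (m l) : A) * p l ^ m l * (1 - p l) ^ (j l - m l)
      else 0 := by
  split_ifs with h
  · rfl
  · rw [binomialTail_eq_zero_of_not_le h, mul_zero]

theorem binomialTail_congr (a : ι → ℕ) {j : ι → ℕ} {p p' : ι → A}
    (h : ∀ l, j l ≠ 0 → p l = p' l) : binomialTail a j p = binomialTail a j p' := by
  refine Finset.sum_congr rfl fun m hm => Finset.prod_congr rfl fun l _ => ?_
  have hml : m l ≤ j l := (Finset.mem_Icc.mp hm).2 l
  by_cases hjl : j l = 0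
  · have hm0 : m l = 0 := Nat.le_zero.mp (hjl ▸ hml)
    simp only [hjl, hm0, pow_zero, Nat.sub_zero]
  · rw [h l hjl]

end BinomialTail

section ShiftCompatible

variable {R : ℕ} {A : Type*}

@[simp]
theorem shiftVec_self (j : Fin R → ℕ) (h : Fin R) : shiftVec j h h = j :=
  if_pos rfl

/-- The compatibility condition on the supports of the weights `q`: moving one edge end of an
index `j` in the support of layer `h` from a layer `l` to `h` lands in the support of layer `l`. The
bound `1 ≤ j l` keeps the subtraction in `shiftVec` from truncating. -/
def IsShiftCompatible [Zero A] (q : Fin R → (Fin R → ℕ) → A) : Prop :=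
  ∀ h j, q h j ≠ 0 → ∀ l, l ≠ h → 1 ≤ j l → q l (shiftVec j l h) ≠ 0

theorem IsShiftCompatible.shiftVec_ne_zero [Zero A] {q : Fin R → (Fin R → ℕ) → A}
    (hq : IsShiftCompatible q) {h l : Fin R} {j : Fin R → ℕ} (hj : q h j ≠ 0) (hjl : j l ≠ 0) :
    q l (shiftVec j l h) ≠ 0 := by
  by_cases hlh : l = h
  · simpa only [hlh, shiftVec_self] using hj
  · exact hq h j hj l hlh (Nat.one_le_iff_ne_zero.mpr hjl)

theorem IsShiftCompatible.mul_binomialTail_shiftVec [CommRing A] {q : Fin R → (Fin R → ℕ) → A}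
    (hq : IsShiftCompatible q) {z : Fin R → A} {Z : Fin R → (Fin R → ℕ) → A}
    (hZ : ∀ l i, q l i ≠ 0 → Z l i = z l) (a : Fin R → ℕ) (h : Fin R) (j : Fin R → ℕ) :
    q h j * binomialTail a j (fun l => Z l (shiftVec j l h)) = q h j * binomialTail a j z := by
  by_cases hj : q h j = 0
  · rw [hj, zero_mul, zero_mul]
  · congr 1
    exact binomialTail_congr a fun l hjl => hZ l _ (hq.shiftVec_ne_zero hj hjl)

end ShiftCompatible

theorem correlated_recursion_eq_uncorrelated_general
    {R : ℕ} {A : Type*} [CommRing A] [NoZeroDivisors A] [TopologicalSpace A]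
    [IsTopologicalSemiring A] [T2Space A]
    {k : Fin R → ℕ} {q : Fin R → (Fin R → ℕ) → A} (hq : IsShiftCompatible q)
    {y : ℕ → Fin R → A} {Y : ℕ → Fin R → (Fin R → ℕ) → A}
    (hzero : ∀ h i, q h i ≠ 0 → Y 0 h i = y 0 h)
    (hy : ∀ n h,
      HasSum (fun j => q h j * binomialTail (kvec k h) j (y n)) (y (n + 1) h))
    (hY : ∀ n h i, q h i ≠ 0 →
      HasSum (fun j => q h i * q h j *
        binomialTail (kvec k h) j (fun l => Y n l (shiftVec j l h))) (q h i * Y (n + 1) h i))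
    (n : ℕ) (h : Fin R) (i : Fin R → ℕ) (hi : q h i ≠ 0) : Y n h i = y n h := by
  induction n generalizing h i with
  | zero => exact hzero h i hi
  | succ n ih =>
    have hcorr : HasSum (fun j => q h i * (q h j * binomialTail (kvec k h) j (y n)))
        (q h i * Y (n + 1) h i) := by
      simpa only [mul_assoc, hq.mul_binomialTail_shiftVec ih] using hY n h i hi
    exact mul_left_cancel₀ hi (hcorr.unique ((hy n h).mul_left (q h i)))

/-- Consistency of the correlated k-core recursion with the uncorrelated one: when the edge
joint distribution factorizes as `e^{[h]}_{i,j} = q^{[h]}_i * q^{[h]}_j`, the solution `Y` of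
the correlated recursion is independent of the conditioning index `i` (wherever `q^{[h]}_i ≠ 0`)
and coincides with the solution `y` of the uncorrelated recursion. -/
theorem correlated_recursion_eq_uncorrelated
    {R : ℕ} (hR : 1 ≤ R) (k : Fin R → ℕ)
    (q : Fin R → (Fin R → ℕ) → ℝ)
    (hq0 : ∀ h i, 0 ≤ q h i)
    (hqsum : ∀ h, Summable (q h))
    (hq1 : ∀ h, ∑' i : Fin R → ℕ, q h i = 1)
    (y : ℕ → Fin R → ℝ) (Y : ℕ → Fin R → (Fin R → ℕ) → ℝ)
    (hy0 : ∀ h, y 0 h = 1)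
    (hy : ∀ n h, y (n + 1) h =
      ∑' j : Fin R → ℕ, if ∀ l : Fin R, kvec k h l ≤ j l then
        q h j * ∑ m ∈ Finset.Icc (kvec k h) j, ∏ l : Fin R,
          ((j l).choose (m l) : ℝ) * (y n l) ^ (m l) * (1 - y n l) ^ (j l - m l)
      else 0)
    (hY0 : ∀ h i, Y 0 h i = 1)
    (hYnull : ∀ n h i, q h i = 0 → Y n h i = 1)
    (hY : ∀ n h i, q h i ≠ 0 → q h i * Y (n + 1) h i =
      ∑' j : Fin R → ℕ, if ∀ l : Fin R, kvec k h l ≤ j l then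
        (q h i * q h j) * ∑ m ∈ Finset.Icc (kvec k h) j, ∏ l : Fin R,
          ((j l).choose (m l) : ℝ) * (Y n l (shiftVec j l h)) ^ (m l) *
            (1 - Y n l (shiftVec j l h)) ^ (j l - m l)
      else 0)
    (hsumy : ∀ n h, Summable (fun j : Fin R → ℕ => if ∀ l : Fin R, kvec k h l ≤ j l then
        q h j * ∑ m ∈ Finset.Icc (kvec k h) j, ∏ l : Fin R,
          ((j l).choose (m l) : ℝ) * (y n l) ^ (m l) * (1 - y n l) ^ (j l - m l)
      else 0))
    (hsumY : ∀ n h (i : Fin R → ℕ), Summable (fun j : Fin R → ℕ => if ∀ l : Fin R, kvec k h l ≤ j l then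
        (q h i * q h j) * ∑ m ∈ Finset.Icc (kvec k h) j, ∏ l : Fin R,
          ((j l).choose (m l) : ℝ) * (Y n l (shiftVec j l h)) ^ (m l) *
            (1 - Y n l (shiftVec j l h)) ^ (j l - m l)
      else 0))
    (hcompat : ∀ h j, q h j ≠ 0 → ∀ l, l ≠ h → 1 ≤ j l → q l (shiftVec j l h) ≠ 0) :
    ∀ (n : ℕ) (h : Fin R) (i : Fin R → ℕ), q h i ≠ 0 → Y n h i = y n h := by
  refine correlated_recursion_eq_uncorrelated_general (k := k) hcompat
    (fun h i _ => (hY0 h i).trans (hy0 h).symm) (fun n h => ?_) (fun n h i hi => ?_)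
  · simpa only [mul_binomialTail_eq_ite, hy] using (hsumy n h).hasSum
  · simpa only [mul_binomialTail_eq_ite, hY n h i hi] using (hsumY n h i).hasSum
end
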